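/- For every integer e ≥ 9 and each i ∈ {2,3}, there exists a finite group G of order 3^{19+e} whose abelianization is isomorphic to (ZMod (3^e)) × (ZMod 3), which admits an automorphism σ such that for every g ∈ G the image of σ(g) in the abelianization equals the inverse of the image of g, whose third derived subgroup is trivial and whose second derived subgroup G'' is a nontrivial abelian group isomorphic to (ZMod 27) × (ZMod 27) × (ZMod 9) × (ZMod 3) × (ZMod 3) × (ZMod 3), and whose quotient G/G'' is isomorphic to a metabelian σ-group of order 3^{8+e} generated by x, y satisfying w^3 = 1, y^3 = s₃ s₄^2, s₂^3 = s₄ t₄^2 w^{i-1}, s₃^3 = s₅, t₃^3 = s₅^2 w^{2(i-1)}, [x^3, y] = s₄ t₄ s₅^2 w^{2(i-1)}, [x^3, s₂] = s₅, t₅ = s₅ w^{i-1}. -/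

import Mathlib

/-- The commutator `[a,b] = a⁻¹ * b⁻¹ * a * b`. -/
def comm' {G : Type*} [Group G] (a b : G) : G := a⁻¹ * b⁻¹ * a * b

/-- `s₂ = [y,x]` and `s_j = [s_(j-1), x]` for `j ≥ 3`. -/
def sgen {G : Type*} [Group G] (x y : G) : ℕ → G
  | 0 => 1
  | 1 => 1
  | 2 => comm' y x
  | (n + 3) => comm' (sgen x y (n + 2)) x

/-- `t_j = [s_(j-1), y]` for `j ≥ 3`. -/
def tgenD {G : Type*} [Group G] (x y : G) (j : ℕ) : G := comm' (sgen x y (j - 1)) y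

/-- `t₂ = [y,x]` and `t_j = [t_(j-1), y]` for `j ≥ 3`. -/
def tgenB {G : Type*} [Group G] (x y : G) : ℕ → G
  | 0 => 1
  | 1 => 1
  | 2 => comm' y x
  | (n + 3) => comm' (tgenB x y (n + 2)) y

/-- A σ-group: a group admitting an automorphism acting as inversion on the
abelianization. -/
def IsSigmaGroup (G : Type*) [Group G] : Prop :=
  ∃ σ : G ≃* G, ∀ g : G, Abelianization.of (σ g) = (Abelianization.of g)⁻¹

/-- A group is metabelian if its commutator subgroup is abelian, i.e. the second
derived subgroup is trivial. -/
def IsMetabelian (G : Type*) [Group G] : Prop := derivedSeries G 2 = ⊥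

/-! ### Cyclic extensions -/

/-- Data for a cyclic extension of `H` by a generator `t` with `h * t = t * f h`, `t ^ n = w`. -/
structure CE (H : Type) [Group H] where
  n : ℕ
  pos : 0 < n
  f : H →* H
  w : H
  fw : f w = w
  fn : ∀ h, w * (f^[n] h) = h * w

namespace CE

/-- The underlying type: the pair `(a, h)` stands for `t ^ a * h`. -/
def T {H : Type} [Group H] (d : CE H) : Type := Fin d.n × H

section basic

variable {H : Type} [Group H] (d : CE H)

instance [DecidableEq H] : DecidableEq d.T := inferInstanceAs (DecidableEq (Fin d.n × H))

instance [Finite H] : Finite d.T := inferInstanceAs (Finite (Fin d.n × H))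

/-- Normal form of `t ^ m * h`. -/
def nf (m : ℕ) (h : H) : d.T := (⟨m % d.n, Nat.mod_lt _ d.pos⟩, d.w ^ (m / d.n) * h)

/-- Multiplication. -/
def mulT (p q : d.T) : d.T :=
  (⟨(p.1.val + q.1.val) % d.n, Nat.mod_lt _ d.pos⟩,
    bif Nat.blt (p.1.val + q.1.val) d.n then d.f^[q.1.val] p.2 * q.2
      else d.w * (d.f^[q.1.val] p.2 * q.2))

/-- Inversion. -/
def invT (p : d.T) : d.T :=
  (⟨(d.n - p.1.val) % d.n, Nat.mod_lt _ d.pos⟩,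
    bif Nat.beq p.1.val 0 then p.2⁻¹ else d.f^[d.n - p.1.val] p.2⁻¹ * d.w⁻¹)

instance : Mul d.T := ⟨d.mulT⟩
instance : One d.T := ⟨(⟨0, d.pos⟩, 1)⟩
instance : Inv d.T := ⟨d.invT⟩

lemma iter_mul (k : ℕ) (a b : H) : d.f^[k] (a * b) = d.f^[k] a * d.f^[k] b :=
  iterate_map_mul d.f k a b

lemma iter_w (k : ℕ) : d.f^[k] d.w = d.w := by
  induction k with
  | zero => rfl
  | succ k ih => rw [Function.iterate_succ_apply, d.fw, ih]

lemma iter_winv (k : ℕ) : d.f^[k] d.w⁻¹ = d.w⁻¹ := by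
  rw [iterate_map_inv, d.iter_w]

lemma iter_wpow (k j : ℕ) : d.f^[k] (d.w ^ j) = d.w ^ j := by
  rw [iterate_map_pow, d.iter_w]

lemma wpow_iter (j r : ℕ) (h : H) :
    d.w ^ j * d.f^[d.n * j + r] h = d.f^[r] h * d.w ^ j := by
  induction j generalizing r with
  | zero => simp
  | succ j ih =>
    have : d.n * (j + 1) + r = d.n * j + (d.n + r) := by ring
    rw [this, pow_succ', mul_assoc, ih, ← mul_assoc, Function.iterate_add_apply, d.fn, mul_assoc]

lemma nf_add (m q : ℕ) (h : H) : d.nf (m + d.n * q) h = d.nf m (d.w ^ q * h) := by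
  unfold nf
  refine Prod.ext ?_ ?_
  · apply Fin.ext
    simp
  · show d.w ^ ((m + d.n * q) / d.n) * h = d.w ^ (m / d.n) * (d.w ^ q * h)
    rw [Nat.add_mul_div_left _ _ d.pos, pow_add, mul_assoc]

lemma eq_nf (p : d.T) : p = d.nf p.1.val p.2 := by
  refine Prod.ext ?_ ?_
  · apply Fin.ext
    exact (Nat.mod_eq_of_lt p.1.2).symm
  · show p.2 = d.w ^ (p.1.val / d.n) * p.2
    rw [Nat.div_eq_of_lt p.1.2, pow_zero, one_mul]

lemma mul_eq_nf (p q : d.T) : p * q = d.nf (p.1.val + q.1.val) (d.f^[q.1.val] p.2 * q.2) := by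
  refine Prod.ext rfl ?_
  show (bif Nat.blt (p.1.val + q.1.val) d.n then d.f^[q.1.val] p.2 * q.2
      else d.w * (d.f^[q.1.val] p.2 * q.2)) = d.w ^ ((p.1.val + q.1.val) / d.n) * _
  by_cases hlt : p.1.val + q.1.val < d.n
  · have : Nat.blt (p.1.val + q.1.val) d.n = true := by simpa using hlt
    rw [this, Nat.div_eq_of_lt hlt]; simp
  · have h1 : Nat.blt (p.1.val + q.1.val) d.n = false := by
      rw [Bool.eq_false_iff]
      intro hb
      exact hlt (by simpa using hb)
    have h2 : (p.1.val + q.1.val) / d.n = 1 := by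
      have := p.1.2; have := q.1.2
      exact Nat.div_eq_of_lt_le (by omega) (by omega)
    rw [h1, h2]; simp

lemma nf_mul_nf (m m' : ℕ) (h k : H) :
    d.nf m h * d.nf m' k = d.nf (m + m') (d.f^[m'] h * k) := by
  rw [mul_eq_nf]
  show d.nf (m % d.n + m' % d.n)
    (d.f^[m' % d.n] (d.w ^ (m / d.n) * h) * (d.w ^ (m' / d.n) * k)) = _
  have e1 : m + m' = (m % d.n + m' % d.n) + d.n * (m / d.n + m' / d.n) := by
    have h1 := Nat.mod_add_div m d.n
    have h2 := Nat.mod_add_div m' d.n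
    rw [mul_add]; omega
  have e2 := d.wpow_iter (m' / d.n) (m' % d.n) h
  rw [Nat.div_add_mod] at e2
  rw [e1, nf_add]
  congr 1
  rw [iter_mul, iter_wpow, pow_add, mul_assoc, mul_assoc, ← mul_assoc _ (d.w ^ (m' / d.n)), ← e2]
  simp only [mul_assoc]

lemma one_eq_nf : (1 : d.T) = d.nf 0 1 := by
  refine Prod.ext ?_ ?_
  · apply Fin.ext
    exact (Nat.zero_mod _).symm
  · show (1 : H) = d.w ^ (0 / d.n) * 1
    simp

lemma inv_eq_nf (p : d.T) : p⁻¹ = d.nf (d.n - p.1.val) (d.f^[d.n - p.1.val] p.2⁻¹ * d.w⁻¹) := by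
  refine Prod.ext rfl ?_
  show (bif Nat.beq p.1.val 0 then p.2⁻¹ else d.f^[d.n - p.1.val] p.2⁻¹ * d.w⁻¹) =
    d.w ^ ((d.n - p.1.val) / d.n) * _
  have hp := p.1.2
  by_cases h0 : p.1.val = 0
  · have h1 := d.fn p.2⁻¹
    rw [h0]
    simp only [Nat.sub_zero, Nat.div_self d.pos, pow_one, ← mul_assoc, h1]
    simp
  · have : Nat.beq p.1.val 0 = false := by
      rw [Bool.eq_false_iff]
      intro hb
      exact h0 (Nat.eq_of_beq_eq_true hb)
    rw [this, Nat.div_eq_of_lt (by omega)]; simp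

instance : Group d.T := Group.ofLeftAxioms
  (by
    intro a b c
    rw [d.eq_nf a, d.eq_nf b, d.eq_nf c]
    simp only [nf_mul_nf]
    rw [iter_mul, ← Function.iterate_add_apply, mul_assoc, add_assoc, add_comm b.1.val])
  (by
    intro a
    rw [one_eq_nf]
    conv_lhs => rw [d.eq_nf a]
    rw [nf_mul_nf, iterate_map_one]
    simp only [zero_add, one_mul]
    exact (d.eq_nf a).symm)
  (by
    intro a
    rw [inv_eq_nf]
    conv_lhs => arg 2; rw [d.eq_nf a]
    rw [nf_mul_nf, one_eq_nf]
    have h1 : d.n - a.1.val + a.1.val = 0 + d.n * 1 := by have := a.1.2; omega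
    rw [h1, nf_add, iter_mul, ← Function.iterate_add_apply]
    have h2 : a.1.val + (d.n - a.1.val) = d.n := by have := a.1.2; omega
    congr 1
    rw [h2, pow_one, iter_winv, ← mul_assoc, ← mul_assoc, d.fn]
    group)

/-- The inclusion of `H`. -/
def inc : H →* d.T where
  toFun h := (⟨0, d.pos⟩, h)
  map_one' := rfl
  map_mul' a b := by
    refine Prod.ext ?_ ?_
    · apply Fin.ext
      exact (Nat.zero_mod _).symm
    · have : Nat.blt 0 d.n = true := by simpa using d.pos
      show a * b = bif Nat.blt 0 d.n then a * b else d.w * (a * b)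
      rw [this]; rfl

lemma inc_eq_nf (h : H) : d.inc h = d.nf 0 h := by
  refine Prod.ext ?_ ?_
  · apply Fin.ext
    exact (Nat.zero_mod _).symm
  · show h = d.w ^ (0 / d.n) * h
    simp

lemma inc_inj : Function.Injective d.inc := fun a b h => congrArg Prod.snd h

/-- The new generator. -/
def t : d.T := d.nf 1 1

lemma t_pow (m : ℕ) : d.t ^ m = d.nf m 1 := by
  induction m with
  | zero => rw [pow_zero, one_eq_nf]
  | succ m ih => rw [pow_succ, ih, t, nf_mul_nf, iterate_map_one, mul_one]

lemma nf_eq (m : ℕ) (h : H) : d.nf m h = d.t ^ m * d.inc h := by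
  rw [t_pow, inc_eq_nf, nf_mul_nf]; simp

lemma t_pow_n : d.t ^ d.n = d.inc d.w := by
  have := d.nf_add 0 1 1
  rw [t_pow, inc_eq_nf]
  simpa using this

lemma inc_mul_t (h : H) : d.inc h * d.t = d.t * d.inc (d.f h) := by
  rw [inc_eq_nf, inc_eq_nf, t, nf_mul_nf, nf_mul_nf]; simp

lemma eq_t_inc (p : d.T) : p = d.t ^ p.1.val * d.inc p.2 := by
  rw [← nf_eq]; exact d.eq_nf p

variable {Q : Type} [Group Q]

/-- The universal property. -/
def lift (g : H →* Q) (q : Q) (hq : ∀ h, g h * q = q * g (d.f h)) (hn : q ^ d.n = g d.w) :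
    d.T →* Q :=
  MonoidHom.mk' (fun p => q ^ p.1.val * g p.2) (by
    have hk : ∀ (k : ℕ) h, g h * q ^ k = q ^ k * g (d.f^[k] h) := by
      intro k
      induction k with
      | zero => intro h; simp
      | succ k ih =>
        intro h
        rw [pow_succ', ← mul_assoc, hq, mul_assoc, ih, Function.iterate_succ_apply, mul_assoc]
    have hnf : ∀ m h, q ^ (d.nf m h).1.val * g (d.nf m h).2 = q ^ m * g h := by
      intro m h
      show q ^ (m % d.n) * g (d.w ^ (m / d.n) * h) = _
      rw [map_mul, map_pow, ← hn, ← pow_mul, ← mul_assoc, ← pow_add, Nat.mod_add_div]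
    intro a b
    rw [mul_eq_nf, hnf, map_mul, pow_add, mul_assoc, ← mul_assoc _ _ (g b.2), ← hk]
    simp only [mul_assoc])

lemma lift_inc (g : H →* Q) (q : Q) (hq) (hn) (h : H) : d.lift g q hq hn (d.inc h) = g h := by
  show q ^ 0 * g h = g h
  simp

lemma lift_t (g : H →* Q) (q : Q) (hq) (hn) : d.lift g q hq hn d.t = q := by
  show q ^ (1 % d.n) * g (d.w ^ (1 / d.n) * 1) = q
  rw [mul_one, map_pow, ← hn, ← pow_mul, ← pow_add, Nat.mod_add_div, pow_one]

lemma card_T : Nat.card d.T = d.n * Nat.card H := by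
  show Nat.card (Fin d.n × H) = _
  rw [Nat.card_prod, Nat.card_fin]

/-- A list generates a group. -/
def Gens (H : Type) [Group H] (l : List H) : Prop := ∀ S : Subgroup H, (∀ g ∈ l, g ∈ S) → S = ⊤

variable {d} in
lemma Gens.up {l : List H} (hl : Gens H l) : Gens d.T (d.t :: l.map d.inc) := by
  intro S hS
  rw [eq_top_iff]
  intro p _
  have h1 : d.t ∈ S := hS _ (by simp)
  have h2 : S.comap d.inc = ⊤ := hl _ (by
    intro g hg
    exact hS _ (by simp only [List.mem_cons, List.mem_map]; exact Or.inr ⟨g, hg, rfl⟩))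
  rw [d.eq_t_inc p]
  refine S.mul_mem (S.pow_mem h1 _) ?_
  have : p.2 ∈ S.comap d.inc := by rw [h2]; trivial
  exact this

lemma Gens.ext {l : List H} (hl : Gens H l) (a b : H →* Q) (h : ∀ g ∈ l, a g = b g) :
    ∀ g, a g = b g := by
  have := hl (a.eqLocus b) (fun g hg => h g hg)
  intro g
  have hg : g ∈ a.eqLocus b := by rw [this]; trivial
  exact hg

lemma Gens.comm {l : List H} (hl : Gens H l) (a b : H →* Q) (q : Q)
    (h : ∀ g ∈ l, a g * q = q * b g) : ∀ g, a g * q = q * b g := by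
  have := hl.ext ((MulAut.conj q⁻¹).toMonoidHom.comp a) b (by
    intro g hg
    have := h g hg
    simp only [MonoidHom.coe_comp, Function.comp, MulEquiv.coe_toMonoidHom, MulAut.conj_apply,
      inv_inv]
    rw [mul_assoc, this]; group)
  intro g
  rw [← this g]
  simp only [MonoidHom.coe_comp, Function.comp, MulEquiv.coe_toMonoidHom, MulAut.conj_apply,
      inv_inv]
  group

end basic

end CE

/-! ### The abelian normal subgroup -/

/-- The abelian group of type `(27, 27, 9, 9, 9, 3)`, written multiplicatively. -/
def B : Type := Fin 27 × Fin 27 × Fin 9 × Fin 9 × Fin 9 × Fin 3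

namespace B

instance : DecidableEq B := inferInstanceAs (DecidableEq (Fin 27 × Fin 27 × Fin 9 × Fin 9 × Fin 9 × Fin 3))
instance : Finite B := inferInstanceAs (Finite (Fin 27 × Fin 27 × Fin 9 × Fin 9 × Fin 9 × Fin 3))

/-- Constructor reducing coordinates. -/
def mk (a b c d e f : ℕ) : B :=
  (⟨a % 27, Nat.mod_lt _ (by decide)⟩, ⟨b % 27, Nat.mod_lt _ (by decide)⟩,
    ⟨c % 9, Nat.mod_lt _ (by decide)⟩, ⟨d % 9, Nat.mod_lt _ (by decide)⟩,
    ⟨e % 9, Nat.mod_lt _ (by decide)⟩, ⟨f % 3, Nat.mod_lt _ (by decide)⟩)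

/-- First coordinate. -/
def c1 (x : B) : ℕ := x.1.val
/-- Second coordinate. -/
def c2 (x : B) : ℕ := x.2.1.val
/-- Third coordinate. -/
def c3 (x : B) : ℕ := x.2.2.1.val
/-- Fourth coordinate. -/
def c4 (x : B) : ℕ := x.2.2.2.1.val
/-- Fifth coordinate. -/
def c5 (x : B) : ℕ := x.2.2.2.2.1.val
/-- Sixth coordinate. -/
def c6 (x : B) : ℕ := x.2.2.2.2.2.val

lemma ext' {x y : B} (h1 : x.c1 = y.c1) (h2 : x.c2 = y.c2) (h3 : x.c3 = y.c3) (h4 : x.c4 = y.c4)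
    (h5 : x.c5 = y.c5) (h6 : x.c6 = y.c6) : x = y :=
  Prod.ext (Fin.ext h1) (Prod.ext (Fin.ext h2) (Prod.ext (Fin.ext h3) (Prod.ext (Fin.ext h4)
    (Prod.ext (Fin.ext h5) (Fin.ext h6)))))

lemma mk_eq_mk (a b c d e f a' b' c' d' e' f' : ℕ) :
    mk a b c d e f = mk a' b' c' d' e' f' ↔ a % 27 = a' % 27 ∧ b % 27 = b' % 27 ∧
      c % 9 = c' % 9 ∧ d % 9 = d' % 9 ∧ e % 9 = e' % 9 ∧ f % 3 = f' % 3 := by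
  constructor
  · intro h
    exact ⟨congrArg c1 h, congrArg c2 h, congrArg c3 h, congrArg c4 h, congrArg c5 h,
      congrArg c6 h⟩
  · rintro ⟨h1, h2, h3, h4, h5, h6⟩
    exact ext' h1 h2 h3 h4 h5 h6

lemma eq_mk (x : B) : x = mk x.c1 x.c2 x.c3 x.c4 x.c5 x.c6 := by
  refine ext' ?_ ?_ ?_ ?_ ?_ ?_ <;> exact (Nat.mod_eq_of_lt (Fin.isLt _)).symm

instance : Mul B := ⟨fun x y => mk (x.c1 + y.c1) (x.c2 + y.c2) (x.c3 + y.c3) (x.c4 + y.c4)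
  (x.c5 + y.c5) (x.c6 + y.c6)⟩
instance : One B := ⟨mk 0 0 0 0 0 0⟩
instance : Inv B := ⟨fun x => mk (27 - x.c1) (27 - x.c2) (9 - x.c3) (9 - x.c4) (9 - x.c5)
  (3 - x.c6)⟩

lemma mk_mul_mk (a b c d e f a' b' c' d' e' f' : ℕ) :
    mk a b c d e f * mk a' b' c' d' e' f' =
      mk (a + a') (b + b') (c + c') (d + d') (e + e') (f + f') := by
  show mk (a % 27 + a' % 27) (b % 27 + b' % 27) (c % 9 + c' % 9) (d % 9 + d' % 9)
    (e % 9 + e' % 9) (f % 3 + f' % 3) = _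
  simp [mk_eq_mk]

instance : Group B := Group.ofLeftAxioms
  (by
    intro x y z
    rw [eq_mk x, eq_mk y, eq_mk z]
    simp only [mk_mul_mk, add_assoc])
  (by
    intro x
    refine Eq.trans ?_ (eq_mk x).symm
    conv_lhs => rw [eq_mk x]
    show mk 0 0 0 0 0 0 * _ = _
    rw [mk_mul_mk]
    simp only [zero_add])
  (by
    intro x
    have h : x⁻¹ = mk (27 - x.c1) (27 - x.c2) (9 - x.c3) (9 - x.c4) (9 - x.c5) (3 - x.c6) := rfl
    rw [h]
    conv_lhs => arg 2; rw [eq_mk x]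
    rw [mk_mul_mk]
    have h1 : x.c1 < 27 := Fin.isLt _
    have h2 : x.c2 < 27 := Fin.isLt _
    have h3 : x.c3 < 9 := Fin.isLt _
    have h4 : x.c4 < 9 := Fin.isLt _
    have h5 : x.c5 < 9 := Fin.isLt _
    have h6 : x.c6 < 3 := Fin.isLt _
    show _ = mk 0 0 0 0 0 0
    rw [mk_eq_mk]
    omega)

lemma comm (x y : B) : x * y = y * x := by
  rw [eq_mk x, eq_mk y, mk_mul_mk, mk_mul_mk, mk_eq_mk]
  simp only [add_comm, and_self]

lemma mk_pow (a b c d e f k : ℕ) :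
    mk a b c d e f ^ k = mk (k * a) (k * b) (k * c) (k * d) (k * e) (k * f) := by
  induction k with
  | zero => simp only [zero_mul, pow_zero]; rfl
  | succ k ih => rw [pow_succ, ih, mk_mul_mk]; simp only [add_mul, one_mul]

/-- The list of basis elements. -/
def basis : List B := [mk 1 0 0 0 0 0, mk 0 1 0 0 0 0, mk 0 0 1 0 0 0, mk 0 0 0 1 0 0,
  mk 0 0 0 0 1 0, mk 0 0 0 0 0 1]

lemma gens : CE.Gens B basis := by
  intro S hS
  simp only [basis, List.forall_mem_cons] at hS
  obtain ⟨h1, h2, h3, h4, h5, h6, -⟩ := hS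
  rw [eq_top_iff]
  intro x _
  have : x = mk 1 0 0 0 0 0 ^ x.c1 * mk 0 1 0 0 0 0 ^ x.c2 * mk 0 0 1 0 0 0 ^ x.c3 *
      mk 0 0 0 1 0 0 ^ x.c4 * mk 0 0 0 0 1 0 ^ x.c5 * mk 0 0 0 0 0 1 ^ x.c6 := by
    simp only [mk_pow, mk_mul_mk]
    simpa using eq_mk x
  rw [this]
  exact S.mul_mem (S.mul_mem (S.mul_mem (S.mul_mem (S.mul_mem (S.pow_mem h1 _) (S.pow_mem h2 _))
    (S.pow_mem h3 _)) (S.pow_mem h4 _)) (S.pow_mem h5 _)) (S.pow_mem h6 _)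

/-- Linear combination of six elements. -/
def comb (v1 v2 v3 v4 v5 v6 x : B) : B :=
  mk (x.c1 * v1.c1 + x.c2 * v2.c1 + x.c3 * v3.c1 + x.c4 * v4.c1 + x.c5 * v5.c1 + x.c6 * v6.c1)
    (x.c1 * v1.c2 + x.c2 * v2.c2 + x.c3 * v3.c2 + x.c4 * v4.c2 + x.c5 * v5.c2 + x.c6 * v6.c2)
    (x.c1 * v1.c3 + x.c2 * v2.c3 + x.c3 * v3.c3 + x.c4 * v4.c3 + x.c5 * v5.c3 + x.c6 * v6.c3)
    (x.c1 * v1.c4 + x.c2 * v2.c4 + x.c3 * v3.c4 + x.c4 * v4.c4 + x.c5 * v5.c4 + x.c6 * v6.c4)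
    (x.c1 * v1.c5 + x.c2 * v2.c5 + x.c3 * v3.c5 + x.c4 * v4.c5 + x.c5 * v5.c5 + x.c6 * v6.c5)
    (x.c1 * v1.c6 + x.c2 * v2.c6 + x.c3 * v3.c6 + x.c4 * v4.c6 + x.c5 * v5.c6 + x.c6 * v6.c6)

lemma comb_eq (v1 v2 v3 v4 v5 v6 x : B) : comb v1 v2 v3 v4 v5 v6 x =
    v1 ^ x.c1 * v2 ^ x.c2 * v3 ^ x.c3 * v4 ^ x.c4 * v5 ^ x.c5 * v6 ^ x.c6 := by
  conv_rhs => rw [eq_mk v1, eq_mk v2, eq_mk v3, eq_mk v4, eq_mk v5, eq_mk v6]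
  simp only [mk_pow, mk_mul_mk]
  rfl

lemma pow_mod' {v : B} {n : ℕ} (h : v ^ n = 1) (k : ℕ) : v ^ (k % n) = v ^ k := by
  conv_rhs => rw [← Nat.mod_add_div k n, pow_add, pow_mul, h, one_pow, mul_one]

/-- The endomorphism with prescribed images of the basis. -/
def hom (v1 v2 v3 v4 v5 v6 : B) (h : v1 ^ 27 = 1 ∧ v2 ^ 27 = 1 ∧ v3 ^ 9 = 1 ∧ v4 ^ 9 = 1 ∧
    v5 ^ 9 = 1 ∧ v6 ^ 3 = 1) : B →* B :=
  MonoidHom.mk' (comb v1 v2 v3 v4 v5 v6) (by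
    obtain ⟨h1, h2, h3, h4, h5, h6⟩ := h
    intro x y
    let _ : CommGroup B := { mul_comm := comm }
    simp only [comb_eq]
    have e1 : (x * y).c1 = (x.c1 + y.c1) % 27 := rfl
    have e2 : (x * y).c2 = (x.c2 + y.c2) % 27 := rfl
    have e3 : (x * y).c3 = (x.c3 + y.c3) % 9 := rfl
    have e4 : (x * y).c4 = (x.c4 + y.c4) % 9 := rfl
    have e5 : (x * y).c5 = (x.c5 + y.c5) % 9 := rfl
    have e6 : (x * y).c6 = (x.c6 + y.c6) % 3 := rfl
    rw [e1, e2, e3, e4, e5, e6, pow_mod' h1, pow_mod' h2, pow_mod' h3, pow_mod' h4, pow_mod' h5,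
      pow_mod' h6]
    simp only [pow_add, mul_assoc, mul_left_comm])

end B

/-! ### The tower of extensions -/

namespace CE

/-- An extension of degree three, with the conditions checked on generators. -/
def mk3 {H : Type} [Group H] {l : List H} (hl : Gens H l) (f : H →* H) (w : H)
    (h : f w = w ∧ ∀ g ∈ l, w * f (f (f g)) = g * w) : CE H where
  n := 3
  pos := by decide
  f := f
  w := w
  fw := h.1
  fn := by
    intro x
    exact (hl.comm (MonoidHom.id H) (f.comp (f.comp f)) w (fun g hg => (h.2 g hg).symm) x).symm

/-- The homomorphism from an extension, with the conditions checked on generators. -/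
def lf {H Q : Type} [Group H] [Group Q] {l : List H} (hl : Gens H l) (d : CE H) (g : H →* Q)
    (q : Q) (h : q ^ d.n = g d.w ∧ ∀ x ∈ l, g x * q = q * g (d.f x)) : d.T →* Q :=
  d.lift g q (hl.comm g (g.comp d.f) q h.2) h.1

/-- Elements in normal form. -/
def el {H : Type} [Group H] (d : CE H) (a : ℕ) (h : H) : d.T := (⟨a % d.n, Nat.mod_lt _ d.pos⟩, h)

end CE

/-- Generators of `B`. -/
abbrev l0 : List B := B.basis
lemma g0 : CE.Gens B l0 := B.gens

/-- Conjugation by `t₄` on `B`. -/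
def f1_0 : B →* B := B.hom (.mk 19 18 0 0 0 0)
  (.mk 9 19 0 0 0 0)
  (.mk 0 0 1 0 0 0)
  (.mk 0 0 0 1 0 0)
  (.mk 0 9 0 0 1 0)
  (.mk 0 0 0 0 0 1)
  (by decide +kernel)

/-- Level 1: adding `t₄`. -/
def d1 : CE B := CE.mk3 g0 f1_0
  (B.mk 21 18 5 0 6 1)
  (by decide +kernel)

/-- Generators of level 1. -/
abbrev l1 : List d1.T := d1.t :: l0.map d1.inc
lemma g1 : CE.Gens d1.T l1 := g0.up
instance : DecidableEq d1.T := inferInstance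

/-- Conjugation by `s₄` on `B`. -/
def f2_0 : B →* B := B.hom (.mk 10 18 0 0 0 0)
  (.mk 9 10 0 0 0 0)
  (.mk 0 0 1 0 0 0)
  (.mk 9 0 0 1 0 0)
  (.mk 0 0 0 0 1 0)
  (.mk 0 0 0 0 0 1)
  (by decide +kernel)

/-- Conjugation by `s₄` on level 1. -/
def f2_1 : d1.T →* d1.T := CE.lf g0 d1 (d1.inc.comp f2_0)
  (d1.el 1 (B.mk 18 0 3 0 0 0))
  (by decide +kernel)

/-- Level 2: adding `s₄`. -/
def d2 : CE d1.T := CE.mk3 g1 f2_1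
  (d1.el 0 (B.mk 12 18 2 6 0 2))
  (by decide +kernel)

/-- Generators of level 2. -/
abbrev l2 : List d2.T := d2.t :: l1.map d2.inc
lemma g2 : CE.Gens d2.T l2 := g1.up
instance : DecidableEq d2.T := inferInstance

/-- Conjugation by `t₃` on `B`. -/
def f3_0 : B →* B := B.hom (.mk 1 18 6 0 0 0)
  (.mk 0 10 3 0 0 0)
  (.mk 0 9 1 0 0 0)
  (.mk 0 18 0 1 0 0)
  (.mk 0 0 0 0 1 0)
  (.mk 0 18 0 0 0 1)
  (by decide +kernel)

/-- Conjugation by `t₃` on level 1. -/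
def f3_1 : d1.T →* d1.T := CE.lf g0 d1 (d1.inc.comp f3_0)
  (d1.el 1 (B.mk 0 12 6 6 0 0))
  (by decide +kernel)

/-- Conjugation by `t₃` on level 2. -/
def f3_2 : d2.T →* d2.T := CE.lf g1 d2 (d2.inc.comp f3_1)
  (d2.el 1 (d1.el 0 (B.mk 18 0 6 6 0 0)))
  (by decide +kernel)

/-- Level 3: adding `t₃`. -/
def d3 : CE d2.T := CE.mk3 g2 f3_2
  (d2.el 0 (d1.el 0 (B.mk 15 15 8 3 2 2)))
  (by decide +kernel)

/-- Generators of level 3. -/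
abbrev l3 : List d3.T := d3.t :: l2.map d3.inc
lemma g3 : CE.Gens d3.T l3 := g2.up
instance : DecidableEq d3.T := inferInstance

/-- Conjugation by `s₃` on `B`. -/
def f4_0 : B →* B := B.hom (.mk 10 18 3 0 0 0)
  (.mk 18 10 6 0 0 0)
  (.mk 18 0 1 0 0 0)
  (.mk 0 0 0 1 0 0)
  (.mk 18 0 0 0 1 0)
  (.mk 18 0 0 0 0 1)
  (by decide +kernel)

/-- Conjugation by `s₃` on level 1. -/
def f4_1 : d1.T →* d1.T := CE.lf g0 d1 (d1.inc.comp f4_0)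
  (d1.el 1 (B.mk 0 18 3 0 6 0))
  (by decide +kernel)

/-- Conjugation by `s₃` on level 2. -/
def f4_2 : d2.T →* d2.T := CE.lf g1 d2 (d2.inc.comp f4_1)
  (d2.el 1 (d1.el 0 (B.mk 15 9 3 0 6 0)))
  (by decide +kernel)

/-- Conjugation by `s₃` on level 3. -/
def f4_3 : d3.T →* d3.T := CE.lf g2 d3 (d3.inc.comp f4_2)
  (d3.el 1 (d2.el 0 (d1.el 0 (B.mk 0 0 0 0 0 1))))
  (by decide +kernel)

/-- Level 4: adding `s₃`. -/
def d4 : CE d3.T := CE.mk3 g3 f4_3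
  (d3.el 0 (d2.el 0 (d1.el 0 (B.mk 0 0 8 1 0 1))))
  (by decide +kernel)

/-- Generators of level 4. -/
abbrev l4 : List d4.T := d4.t :: l3.map d4.inc
lemma g4 : CE.Gens d4.T l4 := g3.up
instance : DecidableEq d4.T := inferInstance

/-- Conjugation by `s₂` on `B`. -/
def f5_0 : B →* B := B.hom (.mk 25 9 0 6 6 0)
  (.mk 18 25 0 3 3 0)
  (.mk 18 9 7 0 0 0)
  (.mk 3 18 6 1 0 0)
  (.mk 9 24 3 0 1 0)
  (.mk 18 18 0 0 0 1)
  (by decide +kernel)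

/-- Conjugation by `s₂` on level 1. -/
def f5_1 : d1.T →* d1.T := CE.lf g0 d1 (d1.inc.comp f5_0)
  (d1.el 1 (B.mk 15 15 1 0 0 0))
  (by decide +kernel)

/-- Conjugation by `s₂` on level 2. -/
def f5_2 : d2.T →* d2.T := CE.lf g1 d2 (d2.inc.comp f5_1)
  (d2.el 1 (d1.el 0 (B.mk 0 0 1 0 0 0)))
  (by decide +kernel)

/-- Conjugation by `s₂` on level 3. -/
def f5_3 : d3.T →* d3.T := CE.lf g2 d3 (d3.inc.comp f5_2)
  (d3.el 1 (d2.el 0 (d1.el 0 (B.mk 0 1 0 0 0 0))))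
  (by decide +kernel)

/-- Conjugation by `s₂` on level 4. -/
def f5_4 : d4.T →* d4.T := CE.lf g3 d4 (d4.inc.comp f5_3)
  (d4.el 1 (d3.el 0 (d2.el 0 (d1.el 0 (B.mk 1 0 0 0 0 0)))))
  (by decide +kernel)

/-- Level 5: adding `s₂`. -/
def d5 : CE d4.T := CE.mk3 g4 f5_4
  (d4.el 0 (d3.el 0 (d2.el 1 (d1.el 2 (B.mk 15 0 0 2 4 0)))))
  (by decide +kernel)

/-- Generators of level 5. -/
abbrev l5 : List d5.T := d5.t :: l4.map d5.inc
lemma g5 : CE.Gens d5.T l5 := g4.up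
instance : DecidableEq d5.T := inferInstance

/-- Conjugation by `y` on `B`. -/
def f6_0 : B →* B := B.hom (.mk 22 0 6 3 3 2)
  (.mk 24 10 1 6 0 0)
  (.mk 12 18 7 0 3 0)
  (.mk 9 18 0 1 6 0)
  (.mk 12 18 7 0 4 2)
  (.mk 18 18 0 0 6 1)
  (by decide +kernel)

/-- Conjugation by `y` on level 1. -/
def f6_1 : d1.T →* d1.T := CE.lf g0 d1 (d1.inc.comp f6_0)
  (d1.el 1 (B.mk 26 0 0 0 1 0))
  (by decide +kernel)

/-- Conjugation by `y` on level 2. -/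
def f6_2 : d2.T →* d2.T := CE.lf g1 d2 (d2.inc.comp f6_1)
  (d2.el 1 (d1.el 0 (B.mk 5 24 4 6 6 0)))
  (by decide +kernel)

/-- Conjugation by `y` on level 3. -/
def f6_3 : d3.T →* d3.T := CE.lf g2 d3 (d3.inc.comp f6_2)
  (d3.el 1 (d2.el 0 (d1.el 1 (B.mk 0 0 0 0 0 0))))
  (by decide +kernel)

/-- Conjugation by `y` on level 4. -/
def f6_4 : d4.T →* d4.T := CE.lf g3 d4 (d4.inc.comp f6_3)
  (d4.el 1 (d3.el 0 (d2.el 0 (d1.el 0 (B.mk 14 24 4 6 6 0)))))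
  (by decide +kernel)

/-- Conjugation by `y` on level 5. -/
def f6_5 : d5.T →* d5.T := CE.lf g4 d5 (d5.inc.comp f6_4)
  (d5.el 1 (d4.el 0 (d3.el 1 (d2.el 0 (d1.el 0 (B.mk 0 0 0 0 0 0))))))
  (by decide +kernel)

/-- Level 6: adding `y`. -/
def d6 : CE d5.T := CE.mk3 g5 f6_5
  (d5.el 0 (d4.el 1 (d3.el 0 (d2.el 2 (d1.el 0 (B.mk 6 0 4 3 0 1))))))
  (by decide +kernel)

/-- Generators of level 6. -/
abbrev l6 : List d6.T := d6.t :: l5.map d6.inc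
lemma g6 : CE.Gens d6.T l6 := g5.up
instance : DecidableEq d6.T := inferInstance

/-- Conjugation by `x` on `B`. -/
def α0 : B →* B := B.hom (.mk 25 18 7 0 6 0)
  (.mk 18 25 0 3 3 1)
  (.mk 18 15 7 3 0 0)
  (.mk 3 15 8 7 0 2)
  (.mk 9 0 3 3 1 0)
  (.mk 18 18 0 3 0 1)
  (by decide +kernel)

/-- Conjugation by `x` on level 1. -/
def α1 : d1.T →* d1.T := CE.lf g0 d1 (d1.inc.comp α0)
  (d1.el 1 (B.mk 24 22 8 0 3 0))
  (by decide +kernel)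

/-- Conjugation by `x` on level 2. -/
def α2 : d2.T →* d2.T := CE.lf g1 d2 (d2.inc.comp α1)
  (d2.el 1 (d1.el 0 (B.mk 0 25 0 1 0 0)))
  (by decide +kernel)

/-- Conjugation by `x` on level 3. -/
def α3 : d3.T →* d3.T := CE.lf g2 d3 (d3.inc.comp α2)
  (d3.el 1 (d2.el 0 (d1.el 0 (B.mk 0 25 7 0 0 1))))
  (by decide +kernel)

/-- Conjugation by `x` on level 4. -/
def α4 : d4.T →* d4.T := CE.lf g3 d4 (d4.inc.comp α3)
  (d4.el 1 (d3.el 0 (d2.el 1 (d1.el 0 (B.mk 0 0 0 0 0 0)))))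
  (by decide +kernel)

/-- Conjugation by `x` on level 5. -/
def α5 : d5.T →* d5.T := CE.lf g4 d5 (d5.inc.comp α4)
  (d5.el 1 (d4.el 1 (d3.el 0 (d2.el 0 (d1.el 0 (B.mk 0 0 0 0 0 0))))))
  (by decide +kernel)

/-- Conjugation by `x` on level 6. -/
def α6 : d6.T →* d6.T := CE.lf g5 d6 (d6.inc.comp α5)
  (d6.el 1 (d5.el 1 (d4.el 0 (d3.el 0 (d2.el 0 (d1.el 0 (B.mk 0 0 0 0 0 0)))))))
  (by decide +kernel)

/-- The automorphism inverting `x` and `y` on `B`. -/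
def τ0 : B →* B := B.hom (.mk 2 0 2 6 0 2)
  (.mk 12 26 2 0 6 1)
  (.mk 3 0 7 3 3 0)
  (.mk 0 0 3 2 6 2)
  (.mk 9 0 0 3 5 2)
  (.mk 9 0 0 3 6 1)
  (by decide +kernel)

/-- The automorphism inverting `x` and `y` on level 1. -/
def τ1 : d1.T →* d1.T := CE.lf g0 d1 (d1.inc.comp τ0)
  (d1.el 1 (B.mk 6 15 6 3 3 0))
  (by decide +kernel)

/-- The automorphism inverting `x` and `y` on level 2. -/
def τ2 : d2.T →* d2.T := CE.lf g1 d2 (d2.inc.comp τ1)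
  (d2.el 1 (d1.el 0 (B.mk 3 24 0 6 3 0)))
  (by decide +kernel)

/-- The automorphism inverting `x` and `y` on level 3. -/
def τ3 : d3.T →* d3.T := CE.lf g2 d3 (d3.inc.comp τ2)
  (d3.el 2 (d2.el 0 (d1.el 2 (B.mk 12 15 0 3 7 2))))
  (by decide +kernel)

/-- The automorphism inverting `x` and `y` on level 4. -/
def τ4 : d4.T →* d4.T := CE.lf g3 d4 (d4.inc.comp τ3)
  (d4.el 2 (d3.el 0 (d2.el 2 (d1.el 0 (B.mk 6 15 4 5 6 2)))))
  (by decide +kernel)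

/-- The automorphism inverting `x` and `y` on level 5. -/
def τ5 : d5.T →* d5.T := CE.lf g4 d5 (d5.inc.comp τ4)
  (d5.el 1 (d4.el 2 (d3.el 2 (d2.el 1 (d1.el 1 (B.mk 13 11 0 4 0 1))))))
  (by decide +kernel)

/-- The automorphism inverting `x` and `y` on level 6. -/
def τ6 : d6.T →* d6.T := CE.lf g5 d6 (d6.inc.comp τ5)
  (d6.el 2 (d5.el 0 (d4.el 2 (d3.el 0 (d2.el 1 (d1.el 0 (B.mk 12 0 1 8 3 2)))))))
  (by decide +kernel)

/-- The value of `x ^ 3 ^ e`. -/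
def z : d6.T := (d6.el 0 (d5.el 0 (d4.el 0 (d3.el 0 (d2.el 0 (d1.el 0 (B.mk 11 2 5 2 4 0)))))))
/-! ### Computations in the normal closure of `y` -/

/-- The normal closure of `y`. -/
abbrev K : Type := d6.T
/-- The commutator subgroup. -/
abbrev N : Type := d5.T

/-- The generator `y`. -/
def yK : K := d6.t

/-- The inclusion of `B` in `N`. -/
def ιN : B →* N := d5.inc.comp (d4.inc.comp (d3.inc.comp (d2.inc.comp d1.inc)))

/-- The inclusion of `B` in `K`. -/
def ιK : B →* K := d6.inc.comp ιN

lemma ιN_inj : Function.Injective ιN :=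
  d5.inc_inj.comp (d4.inc_inj.comp (d3.inc_inj.comp (d2.inc_inj.comp d1.inc_inj)))

lemma ιK_inj : Function.Injective ιK := d6.inc_inj.comp ιN_inj

/-- The projection of `N` to `B`. -/
def bN (k : N) : B := k.2.2.2.2.2

/-- The projection of `K` to `B`. -/
def bK (k : K) : B := bN k.2

lemma card_B : Nat.card B = 3 ^ 13 := by
  show Nat.card (Fin 27 × Fin 27 × Fin 9 × Fin 9 × Fin 9 × Fin 3) = _
  simp

lemma card_K : Nat.card K = 3 ^ 19 := by
  rw [CE.card_T, CE.card_T, CE.card_T, CE.card_T, CE.card_T, CE.card_T, card_B]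
  rfl

/-- The subgroup of `B` that will be the second derived subgroup. -/
def AB : Subgroup B where
  carrier := {b | b.c4 % 3 = 0 ∧ b.c5 % 3 = 0}
  one_mem' := by decide +kernel
  mul_mem' := by
    rintro a b ⟨h1, h2⟩ ⟨h3, h4⟩
    have e4 : (a * b).c4 = (a.c4 + b.c4) % 9 := rfl
    have e5 : (a * b).c5 = (a.c5 + b.c5) % 9 := rfl
    refine ⟨?_, ?_⟩
    · rw [e4]; omega
    · rw [e5]; omega
  inv_mem' := by
    rintro a ⟨h1, h2⟩
    have e4 : (a⁻¹).c4 = (9 - a.c4) % 9 := rfl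
    have e5 : (a⁻¹).c5 = (9 - a.c5) % 9 := rfl
    have h4 : a.c4 < 9 := Fin.isLt _
    have h5 : a.c5 < 9 := Fin.isLt _
    refine ⟨?_, ?_⟩
    · rw [e4]; omega
    · rw [e5]; omega

/-- Parametrization of `AB`. -/
def toB : Multiplicative (ZMod 27 × ZMod 27 × ZMod 9 × ZMod 3 × ZMod 3 × ZMod 3) →* B :=
  MonoidHom.mk' (fun m => B.mk m.toAdd.1.val m.toAdd.2.1.val m.toAdd.2.2.1.val
    (3 * m.toAdd.2.2.2.1.val) (3 * m.toAdd.2.2.2.2.1.val) m.toAdd.2.2.2.2.2.val) (by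
    intro a b
    rw [B.mk_mul_mk, B.mk_eq_mk]
    simp only [toAdd_mul, Prod.fst_add, Prod.snd_add, ZMod.val_add]
    omega)

lemma toB_inj : Function.Injective toB := by
  intro a b h
  have h' := (B.mk_eq_mk _ _ _ _ _ _ _ _ _ _ _ _).1 h
  obtain ⟨h1, h2, h3, h4, h5, h6⟩ := h'
  apply Multiplicative.toAdd.injective
  have l1 := ZMod.val_lt a.toAdd.1
  have l2 := ZMod.val_lt a.toAdd.2.1
  have l3 := ZMod.val_lt a.toAdd.2.2.1
  have l4 := ZMod.val_lt a.toAdd.2.2.2.1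
  have l5 := ZMod.val_lt a.toAdd.2.2.2.2.1
  have l6 := ZMod.val_lt a.toAdd.2.2.2.2.2
  have m1 := ZMod.val_lt b.toAdd.1
  have m2 := ZMod.val_lt b.toAdd.2.1
  have m3 := ZMod.val_lt b.toAdd.2.2.1
  have m4 := ZMod.val_lt b.toAdd.2.2.2.1
  have m5 := ZMod.val_lt b.toAdd.2.2.2.2.1
  have m6 := ZMod.val_lt b.toAdd.2.2.2.2.2
  refine Prod.ext ?_ (Prod.ext ?_ (Prod.ext ?_ (Prod.ext ?_ (Prod.ext ?_ ?_)))) <;>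
    apply ZMod.val_injective <;> omega

lemma toB_range : toB.range = AB := by
  apply le_antisymm
  · rintro _ ⟨m, rfl⟩
    refine ⟨?_, ?_⟩
    · show (3 * m.toAdd.2.2.2.1.val) % 9 % 3 = 0
      omega
    · show (3 * m.toAdd.2.2.2.2.1.val) % 9 % 3 = 0
      omega
  · rintro b ⟨h4, h5⟩
    refine ⟨Multiplicative.ofAdd ((b.c1 : ZMod 27), (b.c2 : ZMod 27), (b.c3 : ZMod 9),
      ((b.c4 / 3 : ℕ) : ZMod 3), ((b.c5 / 3 : ℕ) : ZMod 3), (b.c6 : ZMod 3)), ?_⟩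
    refine Eq.trans ?_ (B.eq_mk b).symm
    refine (B.mk_eq_mk _ _ _ _ _ _ _ _ _ _ _ _).2 ?_
    simp only [toAdd_ofAdd, ZMod.val_natCast]
    omega

/-- `AB` is isomorphic to the expected group. -/
noncomputable def equivAB :
    AB ≃* Multiplicative (ZMod 27 × ZMod 27 × ZMod 9 × ZMod 3 × ZMod 3 × ZMod 3) :=
  (MulEquiv.subgroupCongr toB_range.symm).trans (MonoidHom.ofInjective toB_inj).symm

/-- `AB` in `N`. -/
def AN : Subgroup N := AB.map ιN

/-- A decidable criterion for membership in `AN`. -/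
abbrev PA (k : N) : Prop := k = ιN (bN k) ∧ (bN k).c4 % 3 = 0 ∧ (bN k).c5 % 3 = 0

lemma mem_AN {k : N} (h : PA k) : k ∈ AN := ⟨bN k, h.2, h.1.symm⟩

lemma AB_le (S : Subgroup B) (h1 : B.mk 1 0 0 0 0 0 ∈ S) (h2 : B.mk 0 1 0 0 0 0 ∈ S)
    (h3 : B.mk 0 0 1 0 0 0 ∈ S) (h4 : B.mk 0 0 0 3 0 0 ∈ S) (h5 : B.mk 0 0 0 0 3 0 ∈ S)
    (h6 : B.mk 0 0 0 0 0 1 ∈ S) : AB ≤ S := by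
  rintro x ⟨e4, e5⟩
  have : x = B.mk 1 0 0 0 0 0 ^ x.c1 * B.mk 0 1 0 0 0 0 ^ x.c2 * B.mk 0 0 1 0 0 0 ^ x.c3 *
      B.mk 0 0 0 3 0 0 ^ (x.c4 / 3) * B.mk 0 0 0 0 3 0 ^ (x.c5 / 3) *
        B.mk 0 0 0 0 0 1 ^ x.c6 := by
    simp only [B.mk_pow, B.mk_mul_mk]
    refine Eq.trans (B.eq_mk x) ?_
    rw [B.mk_eq_mk]
    omega
  rw [this]
  exact S.mul_mem (S.mul_mem (S.mul_mem (S.mul_mem (S.mul_mem (S.pow_mem h1 _) (S.pow_mem h2 _))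
    (S.pow_mem h3 _)) (S.pow_mem h4 _)) (S.pow_mem h5 _)) (S.pow_mem h6 _)

/-- The generator `s₂`. -/
def s2 : N := d5.t
/-- The generator `s₃`. -/
def s3 : N := d5.inc d4.t
/-- The generator `t₃`. -/
def t3 : N := d5.inc (d4.inc d3.t)
/-- The generator `s₄`. -/
def s4 : N := d5.inc (d4.inc (d3.inc d2.t))
/-- The generator `t₄`. -/
def t4 : N := d5.inc (d4.inc (d3.inc (d2.inc d1.t)))

lemma AN_normal : AN.Normal := by
  have hf : (AN : Set N).Finite := Set.toFinite _
  have key : Subgroup.normalizer (AN : Set N) = ⊤ := by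
    apply g5
    intro g hg
    rw [← Subgroup.inv_mem_iff]
    apply Subgroup.mem_normalizer_fintype
    have hA : ∀ b ∈ [B.mk 1 0 0 0 0 0, B.mk 0 1 0 0 0 0, B.mk 0 0 1 0 0 0, B.mk 0 0 0 3 0 0,
        B.mk 0 0 0 0 3 0, B.mk 0 0 0 0 0 1], PA (g⁻¹ * ιN b * g) := by
      revert g
      decide +kernel
    simp only [List.forall_mem_cons] at hA
    obtain ⟨h1, h2, h3, h4, h5, h6, -⟩ := hA
    have hh : ∀ b, PA (g⁻¹ * ιN b * g) →
        b ∈ AN.comap ((MulAut.conj g⁻¹).toMonoidHom.comp ιN) := by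
      intro b hb
      rw [Subgroup.mem_comap, MonoidHom.comp_apply, MulEquiv.coe_toMonoidHom,
        MulAut.conj_apply, inv_inv]
      exact mem_AN hb
    have hle : AB ≤ AN.comap ((MulAut.conj g⁻¹).toMonoidHom.comp ιN) :=
      AB_le _ (hh _ h1) (hh _ h2) (hh _ h3) (hh _ h4) (hh _ h5) (hh _ h6)
    rintro _ ⟨b, hb, rfl⟩
    have := hle hb
    rwa [Subgroup.mem_comap, MonoidHom.comp_apply, MulEquiv.coe_toMonoidHom,
      MulAut.conj_apply] at this
  exact Subgroup.normalizer_eq_top_iff.1 key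

lemma commutator_N : ⁅(⊤ : Subgroup N), (⊤ : Subgroup N)⁆ = AN := by
  apply le_antisymm
  · have := AN_normal
    have hg : ∀ g ∈ l5, ∀ h ∈ l5, PA ((h * g)⁻¹ * (g * h)) := by decide +kernel
    have h1 : ∀ h ∈ l5, ∀ g, QuotientGroup.mk' AN g * QuotientGroup.mk' AN h =
        QuotientGroup.mk' AN h * QuotientGroup.mk' AN g := by
      intro h hh
      apply g5.comm
      intro g hg'
      rw [← map_mul, ← map_mul]
      exact (QuotientGroup.eq.2 (mem_AN (hg g hg' h hh))).symm
    have h2 : ∀ g h, QuotientGroup.mk' AN h * QuotientGroup.mk' AN g =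
        QuotientGroup.mk' AN g * QuotientGroup.mk' AN h := by
      intro g
      apply g5.comm
      intro h hh
      exact (h1 h hh g).symm
    rw [Subgroup.commutator_le]
    intro g _ h _
    have h3 := h2 g h
    rw [← map_mul, ← map_mul] at h3
    have h4 : (h * g)⁻¹ * (g * h) ∈ AN := QuotientGroup.eq.1 h3
    have h5 := AN_normal.conj_mem _ h4 (h * g)
    rw [commutatorElement_def]
    convert h5 using 1
    group
  · have hc : ∀ g h : N, comm' g h ∈ ⁅(⊤ : Subgroup N), (⊤ : Subgroup N)⁆ := by
      intro g h
      have := Subgroup.commutator_mem_commutator (H₁ := (⊤ : Subgroup N)) (H₂ := (⊤ : Subgroup N))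
        (g₁ := g⁻¹) (g₂ := h⁻¹) trivial trivial
      rw [commutatorElement_def, inv_inv, inv_inv] at this
      exact this
    generalize ⁅(⊤ : Subgroup N), (⊤ : Subgroup N)⁆ = C at hc
    have h1 : ιN (B.mk 1 0 0 0 0 0) ∈ C := by
      have h : ιN (B.mk 1 0 0 0 0 0) = comm' s3 s2 := by decide +kernel
      rw [h]; exact hc _ _
    have h2 : ιN (B.mk 0 1 0 0 0 0) ∈ C := by
      have h : ιN (B.mk 0 1 0 0 0 0) = comm' t3 s2 := by decide +kernel
      rw [h]; exact hc _ _
    have h3 : ιN (B.mk 0 0 1 0 0 0) ∈ C := by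
      have h : ιN (B.mk 0 0 1 0 0 0) = comm' s4 s2 := by decide +kernel
      rw [h]; exact hc _ _
    have h6 : ιN (B.mk 0 0 0 0 0 1) ∈ C := by
      have h : ιN (B.mk 0 0 0 0 0 1) = comm' t3 s3 := by decide +kernel
      rw [h]; exact hc _ _
    have h4 : ιN (B.mk 0 0 0 3 0 0) ∈ C := by
      have h : ιN (B.mk 0 0 0 3 0 0) = (comm' s4 t3 * ιN (B.mk 1 0 0 0 0 0) ^ 9 *
        ιN (B.mk 0 0 1 0 0 0) ^ 3) ^ 2 := by decide +kernel
      rw [h]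
      exact C.pow_mem (C.mul_mem (C.mul_mem (hc _ _) (C.pow_mem h1 _)) (C.pow_mem h3 _)) _
    have h5 : ιN (B.mk 0 0 0 0 3 0) ∈ C := by
      have h : ιN (B.mk 0 0 0 0 3 0) = (comm' s4 s3 * ιN (B.mk 1 0 0 0 0 0) ^ 12 *
        ιN (B.mk 0 1 0 0 0 0) ^ 18 * ιN (B.mk 0 0 1 0 0 0) ^ 6) ^ 2 := by decide +kernel
      rw [h]
      exact C.pow_mem (C.mul_mem (C.mul_mem (C.mul_mem (hc _ _) (C.pow_mem h1 _))
        (C.pow_mem h2 _)) (C.pow_mem h3 _)) _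
    exact Subgroup.map_le_iff_le_comap.2 (AB_le (C.comap ιN) h1 h2 h3 h4 h5 h6)

/-! Facts about the automorphisms. -/

lemma z_comm (k : K) : k * z = z * k :=
  g6.comm (MonoidHom.id K) (MonoidHom.id K) z (by decide +kernel) k

lemma α_z : α6 z = z := by decide +kernel

lemma τ_z : τ6 z * z = 1 := by decide +kernel

lemma z_pow : z ^ 27 = 1 := by decide +kernel

lemma τ_τ (k : K) : τ6 (τ6 k) = k :=
  g6.ext (τ6.comp τ6) (MonoidHom.id K) (by decide +kernel) k

lemma α_τ_α (k : K) : α6 (τ6 (α6 k)) = τ6 k :=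
  g6.ext (α6.comp (τ6.comp α6)) τ6 (by decide +kernel) k

/-- The exponent of `y` modulo three. -/
def κ : K →* Multiplicative (ZMod 3) :=
  d6.lift 1 (Multiplicative.ofAdd 1) (by intro h; simp) (by decide +kernel)

lemma κ_α (k : K) : κ (α6 k) = κ k := g6.ext (κ.comp α6) κ (by decide +kernel) k

lemma κ_τ (k : K) : κ (τ6 k) = (κ k)⁻¹ := g6.ext (κ.comp τ6) κ⁻¹ (by decide +kernel) k

lemma κ_z : κ z = 1 := by decide +kernel

lemma κ_y : κ yK = Multiplicative.ofAdd 1 := by decide +kernel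

lemma κ_ker {k : K} (h : κ k = 1) : k ∈ d6.inc.range := by
  have h1 : κ k = Multiplicative.ofAdd 1 ^ k.1.val * 1 := rfl
  have h2 : k.1.val = 0 := by
    have h3 : ∀ a : Fin 3, (Multiplicative.ofAdd (1 : ZMod 3)) ^ a.val * 1 = 1 → a.val = 0 := by
      decide
    exact h3 k.1 (h1.symm.trans h)
  refine ⟨k.2, ?_⟩
  conv_rhs => rw [d6.eq_t_inc k, h2, pow_zero, one_mul]

lemma κ_inc (k : N) : κ (d6.inc k) = 1 := d6.lift_inc _ _ _ _ _

lemma chain (S : Subgroup K) (h2 : yK⁻¹ * α6 yK ∈ S) (hα : ∀ k ∈ S, k⁻¹ * α6 k ∈ S)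
    (hy : ∀ k ∈ S, comm' k yK ∈ S) (k : N) : d6.inc k ∈ S := by
  have e2 : yK⁻¹ * α6 yK = d6.inc s2 := by decide +kernel
  rw [e2] at h2
  have e3 : (d6.inc s2)⁻¹ * α6 (d6.inc s2) = d6.inc s3 := by decide +kernel
  have h3 := hα _ h2
  rw [e3] at h3
  have e4 : (d6.inc s3)⁻¹ * α6 (d6.inc s3) = d6.inc s4 := by decide +kernel
  have h4 := hα _ h3
  rw [e4] at h4
  have f3 : comm' (d6.inc s2) yK = d6.inc t3 := by decide +kernel
  have k3 := hy _ h2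
  rw [f3] at k3
  have f4 : comm' (d6.inc t3) yK = d6.inc t4 := by decide +kernel
  have k4 := hy _ k3
  rw [f4] at k4
  have h5 := hα _ h4
  have k5 := hy _ k4
  have hc : ∀ a ∈ S, ∀ b ∈ S, comm' a b ∈ S := fun a ha b hb =>
    S.mul_mem (S.mul_mem (S.mul_mem (S.inv_mem ha) (S.inv_mem hb)) ha) hb
  have b1 := hc _ h3 _ h2
  have b2 := hc _ k3 _ h2
  have b3 := hc _ h4 _ h2
  have b6 := hc _ k3 _ h3
  have b4 := S.mul_mem h5 (S.pow_mem b2 2)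
  have b5 := S.mul_mem k5 b1
  have r1 : comm' (d6.inc s3) (d6.inc s2) = ιK (B.mk 1 0 0 0 0 0) := by decide +kernel
  have r2 : comm' (d6.inc t3) (d6.inc s2) = ιK (B.mk 0 1 0 0 0 0) := by decide +kernel
  have r3 : comm' (d6.inc s4) (d6.inc s2) = ιK (B.mk 0 0 1 0 0 0) := by decide +kernel
  have r6 : comm' (d6.inc t3) (d6.inc s3) = ιK (B.mk 0 0 0 0 0 1) := by decide +kernel
  have r4 : (d6.inc s4)⁻¹ * α6 (d6.inc s4) * comm' (d6.inc t3) (d6.inc s2) ^ 2 =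
    ιK (B.mk 0 0 0 1 0 0) := by decide +kernel
  have r5 : comm' (d6.inc t4) yK * comm' (d6.inc s3) (d6.inc s2) =
    ιK (B.mk 0 0 0 0 1 0) := by decide +kernel
  rw [r1] at b1
  rw [r2] at b2
  rw [r3] at b3
  rw [r4] at b4
  rw [r5] at b5
  rw [r6] at b6
  have ht : S.comap d6.inc = ⊤ := by
    apply g5
    intro g hg
    simp only [l5, l4, l3, l2, l1, l0, B.basis, List.map_cons, List.map_nil, List.mem_cons,
      List.not_mem_nil, or_false] at hg
    rcases hg with rfl | rfl | rfl | rfl | rfl | rfl | rfl | rfl | rfl | rfl | rfl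
    · exact h2
    · exact h3
    · exact k3
    · exact h4
    · exact k4
    · exact b1
    · exact b2
    · exact b3
    · exact b4
    · exact b5
    · exact b6
  have : k ∈ S.comap d6.inc := by rw [ht]; trivial
  exact this

lemma α_iter (k : K) : α6^[81] k = k := by
  have hα : ∀ k : K, α6^[81] k = k → α6^[81] (α6 k) = α6 k := by
    intro k hk
    rw [← Function.iterate_succ_apply, Function.iterate_succ_apply', hk]
  let S : Subgroup K :=
    (MonoidHom.mk' (α6^[81]) (iterate_map_mul α6 81)).eqLocus (MonoidHom.id K)
  have hy : yK ∈ S := by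
    show α6^[81] yK = yK
    decide +kernel
  have hS : ∀ k ∈ S, α6 k ∈ S := hα
  have hN : ∀ k, d6.inc k ∈ S := by
    apply chain
    · exact S.mul_mem (S.inv_mem hy) (hS _ hy)
    · intro k hk
      exact S.mul_mem (S.inv_mem hk) (hS _ hk)
    · intro k hk
      exact S.mul_mem (S.mul_mem (S.mul_mem (S.inv_mem hk) (S.inv_mem hy)) hk) hy
  have hk : k ∈ S := by
    rw [d6.eq_t_inc k]
    exact S.mul_mem (S.pow_mem hy _) (hN _)
  exact hk

/-! ### The group -/

lemma α_iter_e {e : ℕ} (he : 9 ≤ e) (k : K) : α6^[3 ^ e] k = k := by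
  obtain ⟨m, rfl⟩ : ∃ m, e = 4 + m := ⟨e - 4, by omega⟩
  have h : (3 : ℕ) ^ (4 + m) = 81 * 3 ^ m := by rw [pow_add]; norm_num
  rw [h, Function.iterate_mul]
  exact Function.iterate_fixed (α_iter k) _

/-- The cyclic extension data of the group. -/
def dG (e c : ℕ) (he : 9 ≤ e) : CE K where
  n := 3 ^ e
  pos := by positivity
  f := α6
  w := z ^ c
  fw := by rw [map_pow, α_z]
  fn := by
    intro h
    rw [α_iter_e he]
    exact ((Commute.pow_right (z_comm h) c).eq).symm

section group

variable {e c : ℕ} {he : 9 ≤ e}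

/-- Inclusion of `K`. -/
def ι : K →* (dG e c he).T := (dG e c he).inc

/-- The generator `x`. -/
def xG : (dG e c he).T := (dG e c he).t

local notation "𝔾" => CE.T (dG e c he)

lemma ι_inj : Function.Injective (ι : K →* 𝔾) := (dG e c he).inc_inj

lemma ι_x (k : K) : ι k * xG = (xG : 𝔾) * ι (α6 k) := (dG e c he).inc_mul_t k

lemma x_pow : (xG : 𝔾) ^ 3 ^ e = ι (z ^ c) := (dG e c he).t_pow_n

lemma eq_xι (g : 𝔾) : g = xG ^ g.1.val * ι g.2 := (dG e c he).eq_t_inc g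

lemma comm_x (k : K) : comm' (ι k) (xG : 𝔾) = ι (k⁻¹ * α6 k) := by
  unfold comm'
  rw [mul_assoc, mul_assoc, ι_x, inv_mul_cancel_left, map_mul, map_inv]

lemma map_comm' {G H : Type*} [Group G] [Group H] (f : G →* H) (a b : G) :
    f (comm' a b) = comm' (f a) (f b) := by
  simp [comm']

lemma card_G : Nat.card 𝔾 = 3 ^ (19 + e) := by
  rw [CE.card_T, card_K, add_comm, pow_add]
  rfl

/-- The map to the abelianization. -/
def π (e c : ℕ) (he : 9 ≤ e) : CE.T (dG e c he) →* Multiplicative (ZMod (3 ^ e) × ZMod 3) :=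
  (dG e c he).lift
    ((AddMonoidHom.toMultiplicative (AddMonoidHom.inr (ZMod (3 ^ e)) (ZMod 3))).comp κ)
    (Multiplicative.ofAdd (1, 0))
    (by
      intro h
      rw [mul_comm, MonoidHom.comp_apply, MonoidHom.comp_apply]
      congr 2
      exact (κ_α h).symm)
    (by
      have h : κ (z ^ c) = 1 := by rw [map_pow, κ_z, one_pow]
      show _ = (AddMonoidHom.toMultiplicative (AddMonoidHom.inr (ZMod (3 ^ e)) (ZMod 3)))
        (κ (z ^ c))
      rw [h, map_one, ← ofAdd_nsmul]
      show Multiplicative.ofAdd ((3 ^ e) • ((1, 0) : ZMod (3 ^ e) × ZMod 3)) = 1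
      rw [Prod.smul_mk, smul_zero, nsmul_one, ZMod.natCast_self]
      rfl)

lemma π_x : π e c he xG = Multiplicative.ofAdd (1, 0) := (dG e c he).lift_t _ _ _ _

lemma π_ι (k : K) : π e c he (ι k) = Multiplicative.ofAdd (0, (κ k).toAdd) :=
  (dG e c he).lift_inc _ _ _ _ _

lemma π_eq (g : 𝔾) : π e c he g = Multiplicative.ofAdd ((g.1.val : ZMod (3 ^ e)),
    (κ g.2).toAdd) := by
  conv_lhs => rw [eq_xι g]
  rw [map_mul, map_pow, π_x, π_ι, ← ofAdd_nsmul, ← ofAdd_add]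
  simp

lemma π_surj : Function.Surjective (π e c he) := by
  intro m
  refine ⟨xG ^ m.toAdd.1.val * ι (yK ^ m.toAdd.2.val), ?_⟩
  rw [map_mul, map_pow, π_x, π_ι, ← ofAdd_nsmul, ← ofAdd_add, map_pow, κ_y, ← ofAdd_nsmul]
  have : NeZero (3 ^ e) := ⟨by positivity⟩
  simp

/-- Inclusion of `N`. -/
def ιn : N →* 𝔾 := ι.comp d6.inc

lemma ιn_inj : Function.Injective (ιn : N →* 𝔾) := ι_inj.comp d6.inc_inj

lemma π_ker : (π e c he).ker = (ιn : N →* 𝔾).range := by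
  apply le_antisymm
  · intro g hg
    rw [MonoidHom.mem_ker, π_eq] at hg
    have h := Multiplicative.ofAdd.injective hg
    have h1 : ((g.1.val : ℕ) : ZMod (3 ^ e)) = 0 := congrArg Prod.fst h
    have h2 : κ g.2 = 1 := congrArg Prod.snd h
    rw [ZMod.natCast_eq_zero_iff] at h1
    have h3 : g.1.val = 0 := Nat.eq_zero_of_dvd_of_lt h1 g.1.2
    obtain ⟨k, hk⟩ := κ_ker h2
    refine ⟨k, ?_⟩
    rw [eq_xι g, h3, pow_zero, one_mul, ← hk]
    rfl
  · rintro _ ⟨k, rfl⟩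
    rw [MonoidHom.mem_ker]
    show π e c he (ι (d6.inc k)) = 1
    rw [π_ι, κ_inc]
    rfl

lemma comm'_mem {G : Type*} [Group G] (a b : G) : comm' a b ∈ commutator G := by
  have := Subgroup.commutator_mem_commutator (H₁ := (⊤ : Subgroup G)) (H₂ := (⊤ : Subgroup G))
    (g₁ := a⁻¹) (g₂ := b⁻¹) trivial trivial
  rw [commutatorElement_def, inv_inv, inv_inv] at this
  exact this

lemma commutator_G : commutator 𝔾 = (ιn : N →* 𝔾).range := by
  apply le_antisymm
  · rw [← π_ker]
    exact Abelianization.commutator_subset_ker _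
  · rintro _ ⟨k, rfl⟩
    refine chain ((commutator 𝔾).comap ι) ?_ ?_ ?_ k
    · rw [Subgroup.mem_comap, ← comm_x]
      exact comm'_mem _ _
    · intro k _
      rw [Subgroup.mem_comap, ← comm_x]
      exact comm'_mem _ _
    · intro k _
      rw [Subgroup.mem_comap, map_comm']
      exact comm'_mem _ _

/-- The abelianization. -/
noncomputable def abG : Abelianization 𝔾 ≃* Multiplicative (ZMod (3 ^ e) × ZMod 3) :=
  (QuotientGroup.quotientMulEquivOfEq (commutator_G.trans π_ker.symm)).trans
    (QuotientGroup.quotientKerEquivOfSurjective (π e c he) π_surj)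

/-- Inclusion of `B`. -/
def ιB : B →* 𝔾 := ιn.comp ιN

lemma ιB_inj : Function.Injective (ιB : B →* 𝔾) := ιn_inj.comp ιN_inj

lemma derived_two : derivedSeries 𝔾 2 = AB.map ιB := by
  have h1 : derivedSeries 𝔾 1 = (⊤ : Subgroup N).map ιn := by
    rw [derivedSeries_one, commutator_G, MonoidHom.range_eq_map]
  rw [derivedSeries_succ, h1, ← Subgroup.map_commutator, commutator_N, AN, Subgroup.map_map]
  rfl

lemma derived_three : derivedSeries 𝔾 3 = ⊥ := by
  rw [derivedSeries_succ, derived_two, ← Subgroup.map_commutator]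
  have h : ⁅AB, AB⁆ = ⊥ := by
    rw [Subgroup.commutator_eq_bot_iff_le_centralizer]
    intro a _
    rw [Subgroup.mem_centralizer_iff]
    intro b _
    exact B.comm b a
  rw [h, Subgroup.map_bot]

/-- The second derived subgroup. -/
noncomputable def equivD : derivedSeries 𝔾 2 ≃*
    Multiplicative (ZMod 27 × ZMod 27 × ZMod 9 × ZMod 3 × ZMod 3 × ZMod 3) :=
  (MulEquiv.subgroupCongr derived_two).trans
    ((AB.equivMapOfInjective ιB ιB_inj).symm.trans equivAB)

lemma card_D : Nat.card (derivedSeries 𝔾 2) = 3 ^ 11 := by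
  rw [Nat.card_congr equivD.toEquiv, Nat.card_congr Multiplicative.toAdd]
  simp

lemma derived_two_ne : derivedSeries 𝔾 2 ≠ ⊥ := by
  intro h
  have := card_D (e := e) (c := c) (he := he)
  rw [h, Subgroup.card_bot] at this
  norm_num at this

lemma ι_xinv (k : K) : ι (α6 k) * xG⁻¹ = (xG : 𝔾)⁻¹ * ι k := by
  rw [eq_inv_mul_iff_mul_eq, ← mul_assoc, ← ι_x, mul_inv_cancel_right]

/-- The automorphism inverting the generators, as a homomorphism. -/
def σh (e c : ℕ) (he : 9 ≤ e) : CE.T (dG e c he) →* CE.T (dG e c he) :=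
  (dG e c he).lift (ι.comp τ6) xG⁻¹
    (by
      intro h
      show ι (τ6 h) * xG⁻¹ = xG⁻¹ * ι (τ6 (α6 h))
      rw [← ι_xinv, α_τ_α])
    (by
      show (xG⁻¹) ^ 3 ^ e = ι (τ6 (z ^ c))
      have : τ6 z = z⁻¹ := eq_inv_of_mul_eq_one_left τ_z
      rw [inv_pow, x_pow, map_pow τ6, this, inv_pow, map_inv])

lemma σh_x : σh e c he xG = xG⁻¹ := (dG e c he).lift_t _ _ _ _

lemma σh_ι (k : K) : σh e c he (ι k) = ι (τ6 k) := (dG e c he).lift_inc _ _ _ _ _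

lemma σσ (g : 𝔾) : σh e c he (σh e c he g) = g := by
  conv_lhs => rw [eq_xι g]
  simp only [map_mul, map_pow, σh_x, σh_ι, map_inv, inv_inv, τ_τ]
  exact (eq_xι g).symm

/-- The automorphism inverting the generators. -/
def σG : 𝔾 ≃* 𝔾 :=
  MonoidHom.toMulEquiv (σh e c he) (σh e c he) (MonoidHom.ext σσ) (MonoidHom.ext σσ)

lemma σG_ab (g : 𝔾) : Abelianization.of (σG g) = (Abelianization.of g)⁻¹ := by
  rw [← map_inv]
  refine QuotientGroup.eq.2 ?_
  rw [commutator_G, ← π_ker, MonoidHom.mem_ker, map_mul, map_inv, map_inv]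
  have h : π e c he (σG g) = (π e c he g)⁻¹ := by
    show π e c he (σh e c he g) = _
    conv_lhs => rw [eq_xι g]
    conv_rhs => rw [eq_xι g]
    simp only [map_mul, map_pow, σh_x, σh_ι, map_inv, π_ι, κ_τ, π_x, mul_inv, inv_pow]
    congr 1
    rw [← ofAdd_neg]
    simp
  rw [h, inv_inv, mul_inv_cancel]

lemma closure_G : Subgroup.closure {(xG : 𝔾), ι yK} = ⊤ := by
  have hx : (xG : 𝔾) ∈ Subgroup.closure {(xG : 𝔾), ι yK} := Subgroup.subset_closure (by simp)
  have hy : (ι yK : 𝔾) ∈ Subgroup.closure {(xG : 𝔾), ι yK} := Subgroup.subset_closure (by simp)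
  generalize Subgroup.closure {(xG : 𝔾), ι yK} = S at hx hy
  have hc : ∀ a ∈ S, ∀ b ∈ S, comm' a b ∈ S := fun a ha b hb =>
    S.mul_mem (S.mul_mem (S.mul_mem (S.inv_mem ha) (S.inv_mem hb)) ha) hb
  have hN : ∀ k : N, d6.inc k ∈ S.comap ι := by
    apply chain
    · rw [Subgroup.mem_comap, ← comm_x]
      exact hc _ hy _ hx
    · intro k hk
      rw [Subgroup.mem_comap, ← comm_x]
      exact hc _ hk _ hx
    · intro k hk
      rw [Subgroup.mem_comap, map_comm']
      exact hc _ hk _ hy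
  rw [eq_top_iff]
  intro g _
  rw [eq_xι g]
  refine S.mul_mem (S.pow_mem hx _) ?_
  rw [d6.eq_t_inc g.2, map_mul, map_pow]
  exact S.mul_mem (S.pow_mem hy _) (hN _)

/-! ### The metabelianization -/

/-- The quotient map. -/
def φ (e c : ℕ) (he : 9 ≤ e) : CE.T (dG e c he) →* CE.T (dG e c he) ⧸ derivedSeries (CE.T (dG e c he)) 2 :=
  QuotientGroup.mk' _

lemma φ_surj : Function.Surjective (φ e c he) := QuotientGroup.mk'_surjective _

lemma φ_ker : (φ e c he).ker = derivedSeries 𝔾 2 := QuotientGroup.ker_mk' _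

lemma map_sgen {G H : Type*} [Group G] [Group H] (f : G →* H) (x y : G) :
    ∀ j, f (sgen x y j) = sgen (f x) (f y) j
  | 0 => map_one f
  | 1 => map_one f
  | 2 => map_comm' f y x
  | (n + 3) => by rw [sgen, sgen, map_comm', map_sgen f x y (n + 2)]

lemma map_tgenB {G H : Type*} [Group G] [Group H] (f : G →* H) (x y : G) :
    ∀ j, f (tgenB x y j) = tgenB (f x) (f y) j
  | 0 => map_one f
  | 1 => map_one f
  | 2 => map_comm' f y x
  | (n + 3) => by rw [tgenB, tgenB, map_comm', map_tgenB f x y (n + 2)]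

/-- Composite of the inclusion of `K` and the quotient map. -/
def ψ (e c : ℕ) (he : 9 ≤ e) : K →* CE.T (dG e c he) ⧸ derivedSeries (CE.T (dG e c he)) 2 :=
  (φ e c he).comp ι

lemma ψ_rel {a b : K} (h : κ (a⁻¹ * b) = 1 ∧ PA (a⁻¹ * b).2) : ψ e c he a = ψ e c he b := by
  refine QuotientGroup.eq.2 ?_
  rw [← map_inv, ← map_mul]
  obtain ⟨h1, h2⟩ := h
  obtain ⟨k, hk⟩ := κ_ker h1
  rw [← hk] at h2 ⊢
  have h3 : k ∈ AN := mem_AN h2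
  rw [derived_two]
  obtain ⟨b, hb, rfl⟩ := h3
  exact ⟨b, hb, rfl⟩

lemma card_M : Nat.card (𝔾 ⧸ derivedSeries 𝔾 2) = 3 ^ (8 + e) := by
  have h := Subgroup.card_eq_card_quotient_mul_card_subgroup (derivedSeries 𝔾 2)
  rw [card_G, card_D] at h
  have h2 : (3 : ℕ) ^ (19 + e) = 3 ^ (8 + e) * 3 ^ 11 := by rw [← pow_add]; congr 1; omega
  rw [h2] at h
  exact (Nat.eq_of_mul_eq_mul_right (by positivity) h).symm

lemma metab_M : IsMetabelian (𝔾 ⧸ derivedSeries 𝔾 2) := by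
  have h := map_derivedSeries_eq (φ_surj (e := e) (c := c) (he := he)) 2
  unfold IsMetabelian
  rw [← h, Subgroup.map_eq_bot_iff, φ_ker]

lemma sigma_M : IsSigmaGroup (𝔾 ⧸ derivedSeries 𝔾 2) := by
  have hD : (derivedSeries 𝔾 2).map (σG : 𝔾 ≃* 𝔾).toMonoidHom = derivedSeries 𝔾 2 :=
    Subgroup.characteristic_iff_map_eq.1 inferInstance σG
  refine ⟨QuotientGroup.congr _ _ σG hD, ?_⟩
  intro m
  obtain ⟨g, rfl⟩ := φ_surj m
  have h := congrArg (Abelianization.map (φ e c he)) (σG_ab g)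
  rw [map_inv, Abelianization.map_of, Abelianization.map_of] at h
  exact h

end group

lemma exists_c {i : ℕ} (hi : i = 2 ∨ i = 3) : ∃ c, (z ^ c) ^ (i - 1) = z := by
  rcases hi with rfl | rfl
  · exact ⟨1, by rw [pow_one, pow_one]⟩
  · refine ⟨14, ?_⟩
    rw [← pow_mul]
    show z ^ (27 + 1) = z
    rw [pow_add, z_pow, one_mul, pow_one]

theorem stmt18 (e i : ℕ) (he : 9 ≤ e) (hi : i = 2 ∨ i = 3) :
    ∃ (G : Type) (_ : Group G) (_ : Finite G),
      Nat.card G = 3 ^ (19 + e) ∧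
      Nonempty (Abelianization G ≃* Multiplicative (ZMod (3 ^ e) × ZMod 3)) ∧
      (∃ σ : G ≃* G, ∀ g : G, Abelianization.of (σ g) = (Abelianization.of g)⁻¹) ∧
      derivedSeries G 3 = ⊥ ∧
      derivedSeries G 2 ≠ ⊥ ∧
      Nonempty ((derivedSeries G 2) ≃*
        Multiplicative (ZMod 27 × ZMod 27 × ZMod 9 × ZMod 3 × ZMod 3 × ZMod 3)) ∧
      ∃ (M : Type) (_ : Group M) (_ : Finite M) (x y : M),
        Subgroup.closure {x, y} = ⊤ ∧
        Nat.card M = 3 ^ (8 + e) ∧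
        IsMetabelian M ∧
        IsSigmaGroup M ∧
        (x ^ 3 ^ e) ^ 3 = 1 ∧
        y ^ 3 = sgen x y 3 * sgen x y 4 ^ 2 ∧
        sgen x y 2 ^ 3 = sgen x y 4 * tgenB x y 4 ^ 2 * (x ^ 3 ^ e) ^ (i - 1) ∧
        sgen x y 3 ^ 3 = sgen x y 5 ∧
        tgenB x y 3 ^ 3 = sgen x y 5 ^ 2 * (x ^ 3 ^ e) ^ (2 * (i - 1)) ∧
        comm' (x ^ 3) y = sgen x y 4 * tgenB x y 4 * sgen x y 5 ^ 2 * (x ^ 3 ^ e) ^ (2 * (i - 1)) ∧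
        comm' (x ^ 3) (sgen x y 2) = sgen x y 5 ∧
        tgenB x y 5 = sgen x y 5 * (x ^ 3 ^ e) ^ (i - 1) ∧
        ∃ φ : G →* M, Function.Surjective φ ∧ φ.ker = derivedSeries G 2 := by
  obtain ⟨c, hc⟩ := exists_c hi
  have hw : ∀ j, ((φ e c he xG) ^ 3 ^ e) ^ (j * (i - 1)) = ψ e c he (z ^ j) := by
    intro j
    rw [← map_pow, x_pow]
    show ψ e c he (z ^ c) ^ (j * (i - 1)) = _
    rw [← map_pow, mul_comm, pow_mul, hc]
  have hw1 : ((φ e c he xG) ^ 3 ^ e) ^ (i - 1) = ψ e c he z := by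
    have := hw 1
    rwa [one_mul, pow_one] at this
  have hw2 := hw 2
  have hw3 : ((φ e c he xG) ^ 3 ^ e) ^ 3 = 1 := by
    rw [← map_pow, x_pow]
    show ψ e c he (z ^ c) ^ 3 = _
    rw [← map_pow, ← pow_mul, mul_comm, pow_mul, map_pow]
    have : ψ e c he (z ^ 3) = ψ e c he 1 := ψ_rel (by decide +kernel)
    rw [this, map_one, one_pow]
  have hx : ∀ k, comm' (ψ e c he k) (φ e c he xG) = ψ e c he (k⁻¹ * α6 k) := by
    intro k
    show comm' (φ e c he (ι k)) (φ e c he xG) = φ e c he (ι (k⁻¹ * α6 k))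
    rw [← comm_x, map_comm']
  have hy : ∀ k, comm' (ψ e c he k) (ψ e c he yK) = ψ e c he (comm' k yK) :=
    fun k => (map_comm' _ _ _).symm
  have hx3 : ∀ k, comm' (φ e c he xG ^ 3) (ψ e c he k) =
      ψ e c he ((α6 (α6 (α6 k)))⁻¹ * k) := by
    intro k
    have h : comm' ((xG : (dG e c he).T) ^ 3) (ι k) = ι ((α6 (α6 (α6 k)))⁻¹ * k) := by
      have h3 : ι (α6 (α6 (α6 k))) = (xG : (dG e c he).T)⁻¹ ^ 3 * ι k * xG ^ 3 := by
        have h1 : ∀ k : K, ι (α6 k) = (xG : (dG e c he).T)⁻¹ * ι k * xG := by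
          intro k
          rw [mul_assoc, ι_x, inv_mul_cancel_left]
        rw [h1, h1, h1]
        simp only [pow_succ, pow_zero, one_mul, mul_assoc]
      rw [map_mul, map_inv, h3, comm']
      group
    rw [← map_pow]
    show comm' (φ e c he _) (φ e c he (ι k)) = φ e c he (ι _)
    rw [← h, map_comm']
  have hs2 : sgen (φ e c he xG) (ψ e c he yK) 2 = ψ e c he (d6.inc s2) := by
    rw [sgen, hx]; exact ψ_rel (by decide +kernel)
  have hs3 : sgen (φ e c he xG) (ψ e c he yK) 3 = ψ e c he (d6.inc s3) := by
    rw [sgen, hs2, hx]; exact ψ_rel (by decide +kernel)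
  have hs4 : sgen (φ e c he xG) (ψ e c he yK) 4 = ψ e c he (d6.inc s4) := by
    rw [sgen, hs3, hx]; exact ψ_rel (by decide +kernel)
  have hs5 : sgen (φ e c he xG) (ψ e c he yK) 5 = ψ e c he (ιK (B.mk 0 0 0 1 0 0)) := by
    rw [sgen, hs4, hx]; exact ψ_rel (by decide +kernel)
  have ht2 : tgenB (φ e c he xG) (ψ e c he yK) 2 = ψ e c he (d6.inc s2) := hs2
  have ht3 : tgenB (φ e c he xG) (ψ e c he yK) 3 = ψ e c he (d6.inc t3) := by
    rw [tgenB, ht2, hy]; exact ψ_rel (by decide +kernel)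
  have ht4 : tgenB (φ e c he xG) (ψ e c he yK) 4 = ψ e c he (d6.inc t4) := by
    rw [tgenB, ht3, hy]; exact ψ_rel (by decide +kernel)
  have ht5 : tgenB (φ e c he xG) (ψ e c he yK) 5 = ψ e c he (ιK (B.mk 0 0 0 0 1 0)) := by
    rw [tgenB, ht4, hy]; exact ψ_rel (by decide +kernel)
  refine ⟨(dG e c he).T, inferInstance, inferInstance, card_G, ⟨abG⟩, ⟨σG, σG_ab⟩, derived_three,
    derived_two_ne, ⟨equivD⟩, (dG e c he).T ⧸ derivedSeries (dG e c he).T 2, inferInstance,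
    inferInstance, φ e c he xG, ψ e c he yK, ?_, card_M, metab_M, sigma_M, hw3, ?_, ?_, ?_, ?_,
    ?_, ?_, ?_, φ e c he, φ_surj, φ_ker⟩
  · have h := congrArg (Subgroup.map (φ e c he)) (closure_G (e := e) (c := c) (he := he))
    rw [MonoidHom.map_closure, Set.image_pair, Subgroup.map_top_of_surjective _ φ_surj] at h
    exact h
  · rw [hs3, hs4, ← map_pow (ψ e c he), ← map_pow (ψ e c he),
      ← map_mul (ψ e c he)]
    exact ψ_rel (by decide +kernel)
  · rw [hs2, hs4, ht4, hw1, ← map_pow (ψ e c he),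
      ← map_pow (ψ e c he), ← map_mul (ψ e c he), ← map_mul (ψ e c he)]
    exact ψ_rel (by decide +kernel)
  · rw [hs3, hs5, ← map_pow (ψ e c he)]
    exact ψ_rel (by decide +kernel)
  · rw [ht3, hs5, hw2, ← map_pow (ψ e c he), ← map_pow (ψ e c he),
      ← map_mul (ψ e c he)]
    exact ψ_rel (by decide +kernel)
  · rw [hx3, hs4, ht4, hs5, hw2, ← map_pow (ψ e c he),
      ← map_mul (ψ e c he), ← map_mul (ψ e c he), ← map_mul (ψ e c he)]
    exact ψ_rel (by decide +kernel)
  · rw [hs2, hx3, hs5]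
    exact ψ_rel (by decide +kernel)
  · rw [ht5, hs5, hw1, ← map_mul (ψ e c he)]
    exact ψ_rel (by decide +kernel)
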